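/- For every real φ > 0, the variance of the Bell distribution with parameter φ equals φ e^φ (1 + φ): ∑_{y=0}^∞ (y − φ e^φ)² · p_φ(y) = φ e^φ (1 + φ), where p_φ(y) = φ^y · e^{1 − e^φ} · B_y / y!. In particular the variance strictly exceeds the mean φ e^φ (over-dispersion). -/

import Mathlib

/-!
By Dobinski's formula, the Bell distribution is a mixture of Poisson distributions of parameters
`φ l`, with `l` itself Poisson of parameter `e^φ`. With `E = e^φ` and `m = φ E`, the
variance is the double sum over `y` and `l` of
`e^{-E} (y - m)² (φ l)^y / (y! l!)`. All terms are nonnegative, so the two summations may be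
exchanged as soon as the iterated sum (`y` first) converges. Both iterated sums are instances of
`∑ (a n² + b n + c) x^n / n! = (a (x² + x) + b x + c) e^x`: the one over `y` has `x = φ l` and
produces a quadratic polynomial in `l` times `E^l`, and the one over `l` then has `x = E`.
-/

/-- The `n`-th Bell number, defined by Dobinski's formula
`B_n = e⁻¹ · ∑_{l=0}^∞ l^n / l!` (with the convention `0^0 = 1`). -/
noncomputable def bellNumber (n : ℕ) : ℝ :=
  Real.exp (-1) * ∑' l : ℕ, (l : ℝ) ^ n / (Nat.factorial l : ℝ)

/-- The probability mass function of the Bell distribution with parameter `φ`: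
`p_φ(y) = φ^y · e^{1 − e^φ} · B_y / y!`. -/
noncomputable def bellPMF (φ : ℝ) (y : ℕ) : ℝ :=
  φ ^ y * Real.exp (1 - Real.exp φ) * bellNumber y / (Nat.factorial y : ℝ)

/-- Weighting the terms of an exponential-type series by `n` amounts to shifting the coefficient
sequence and multiplying by `x`, as for the operator `x d/dx` on generating functions. -/
lemma hasSum_nat_mul_pow_div_factorial {g : ℕ → ℝ} {x s : ℝ}
    (h : HasSum (fun n : ℕ => g (n + 1) * (x ^ n / (n.factorial : ℝ))) s) :
    HasSum (fun n : ℕ => (n : ℝ) * g n * (x ^ n / (n.factorial : ℝ))) (x * s) := by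
  rw [← hasSum_nat_add_iff' 1]
  convert h.mul_left x using 1
  · rfl
  · funext n
    have h1 : (n.factorial : ℝ) ≠ 0 := by positivity
    have h2 : (n : ℝ) + 1 ≠ 0 := by positivity
    rw [Nat.factorial_succ]
    push_cast
    field_simp
    ring
  · simp

lemma hasSum_pow_div_factorial (x : ℝ) :
    HasSum (fun n : ℕ => x ^ n / (n.factorial : ℝ)) (Real.exp x) := by
  rw [Real.exp_eq_exp_ℝ]
  exact NormedSpace.expSeries_div_hasSum_exp x

/-- The exponential series with quadratic weights; up to the factor `e^x`, these are the moments
of order at most two of the Poisson distribution. -/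
lemma hasSum_quadratic_mul_pow_div_factorial (a b c x : ℝ) :
    HasSum (fun n : ℕ => (a * (n : ℝ) ^ 2 + b * n + c) * (x ^ n / (n.factorial : ℝ)))
      ((a * (x ^ 2 + x) + b * x + c) * Real.exp x) := by
  have h0 := hasSum_pow_div_factorial x
  have h1 : HasSum (fun n : ℕ => (n : ℝ) * (x ^ n / (n.factorial : ℝ))) (x * Real.exp x) := by
    simpa using hasSum_nat_mul_pow_div_factorial (g := fun _ => 1) (by simpa using h0)
  have h2 : HasSum (fun n : ℕ => (n : ℝ) * n * (x ^ n / (n.factorial : ℝ)))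
      (x * (x * Real.exp x + Real.exp x)) := by
    apply hasSum_nat_mul_pow_div_factorial (g := fun n => (n : ℝ))
    convert h1.add h0 using 2 with n
    push_cast
    ring
  convert ((h2.mul_left a).add (h1.mul_left b)).add (h0.mul_left c) using 1
  · rfl
  · funext n
    ring
  · ring

/-- For every real `φ > 0`, the variance of the Bell distribution with parameter `φ`
equals `φ e^φ (1 + φ)`; in particular it strictly exceeds the mean `φ e^φ`
(over-dispersion). -/
theorem bell_variance (φ : ℝ) (hφ : 0 < φ) :
    (∑' y : ℕ, ((y : ℝ) - φ * Real.exp φ) ^ 2 * bellPMF φ y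
        = φ * Real.exp φ * (1 + φ)) ∧
      φ * Real.exp φ < φ * Real.exp φ * (1 + φ) := by
  have hE : 0 < Real.exp φ := Real.exp_pos φ
  refine ⟨?_, by nlinarith [mul_pos (mul_pos hφ hE) hφ]⟩
  set E := Real.exp φ with hEdef
  set m := φ * E with hm
  let f : ℕ → ℕ → ℝ := fun l y =>
    Real.exp (-E) * (((y : ℝ) - m) ^ 2 * ((φ * l) ^ y / (y.factorial : ℝ))
      * (1 / (l.factorial : ℝ)))
  have hf0 : ∀ p : ℕ × ℕ, 0 ≤ Function.uncurry f p := by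
    rintro ⟨l, y⟩
    simp only [Function.uncurry_apply_pair, f]
    positivity
  have hin : ∀ l : ℕ, HasSum (f l)
      (Real.exp (-E) * ((φ ^ 2 * (l : ℝ) ^ 2 + (φ - 2 * m * φ) * l + m ^ 2)
        * (E ^ l / (l.factorial : ℝ)))) := by
    intro l
    have h := ((hasSum_quadratic_mul_pow_div_factorial 1 (-2 * m) (m ^ 2) (φ * l)).mul_right
      (1 / (l.factorial : ℝ))).mul_left (Real.exp (-E))
    have hexp : Real.exp (φ * l) = E ^ l := by
      rw [mul_comm, Real.exp_nat_mul]
    rw [hexp] at h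
    convert h using 1
    · rfl
    · funext y
      simp only [f]
      ring
    · ring
  have hout := (hasSum_quadratic_mul_pow_div_factorial (φ ^ 2) (φ - 2 * m * φ) (m ^ 2) E).mul_left
    (Real.exp (-E))
  have hsum : Summable (Function.uncurry f) := by
    rw [summable_prod_of_nonneg hf0]
    refine ⟨fun l => (hin l).summable, ?_⟩
    refine hout.summable.congr fun l => ?_
    exact (hin l).tsum_eq.symm
  have hterm : ∀ y : ℕ, ((y : ℝ) - m) ^ 2 * bellPMF φ y = ∑' l : ℕ, f l y := by
    intro y
    have hcancel : Real.exp (1 - E) * Real.exp (-1) = Real.exp (-E) := by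
      rw [← Real.exp_add]
      congr 1
      ring
    have hfl : ∀ l : ℕ, f l y = Real.exp (-E) * ((y : ℝ) - m) ^ 2 * φ ^ y / (y.factorial : ℝ)
        * ((l : ℝ) ^ y / (l.factorial : ℝ)) := by
      intro l
      simp only [f, mul_pow]
      ring
    simp_rw [hfl]
    rw [tsum_mul_left, ← hcancel, bellPMF, bellNumber]
    ring
  rw [tsum_congr hterm, hsum.tsum_comm, tsum_congr fun l => (hin l).tsum_eq, hout.tsum_eq]
  have hinv : Real.exp (-E) * Real.exp E = 1 := by
    rw [← Real.exp_add, neg_add_cancel, Real.exp_zero]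
  rw [mul_left_comm, hinv, hm]
  ring
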